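/- Let η ∈ (0, 1/4) and δ > 0 be constants. Then there exists n₀ such that for every integer n ≥ n₀, every forest F on n vertices whose maximum degree Δ satisfies 15 ≤ Δ ≤ (1/4 − η)n, and every balanced colouring c : E(K_n) → {−1, +1} of the edges of K_n, there exists a copy F' of F in K_n such that |c(F')| ≤ (1 + δ)·(4/η). -/

import Mathlib

/-!
Signed sums of copies of the forest average to zero over all relabellings `f` of the vertices.
So it suffices to join any two relabellings by a chain along which the signed sum changes by at
most `2k` at a time, where `k = ⌊4 / η⌋`: somewhere on a chain from a nonpositive to a
nonnegative sum, the absolute value is at most `k`.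

The chains rearrange larger and larger sets `T` of vertices of the forest. To add `u` to `T`,
swap its image with that of a vertex `v ∈ T` of degree at most one. If `u` has degree less than
`k`, this changes the sum by at most `2k`. The few vertices of larger degree are added last,
each time one with at most one neighbour outside `T`, after its neighbours in `T` have been
moved so that the effect of the swap nearly cancels. Such a position for the neighbours exists
whenever the signed degrees of the two images differ by at most `3n/2`, and in a balanced
colouring any two vertices are joined by three steps of this kind.
-/

open Finset Equiv

section Forest

variable {V : Type*} [Fintype V] {F : SimpleGraph V} [DecidableRel F.Adj]

lemma card_edgeFinset_lt_card_of_isAcyclic [Nonempty V] (hF : F.IsAcyclic) :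
    #F.edgeFinset < Fintype.card V := by
  classical
  obtain ⟨T, hFT, -, hT⟩ :=
    SimpleGraph.connected_top.exists_isTree_le_of_le_of_isAcyclic le_top hF
  calc #F.edgeFinset ≤ #T.edgeFinset := card_le_card (SimpleGraph.edgeFinset_mono hFT)
    _ < Fintype.card V := by rw [← hT.card_edgeFinset]; exact Nat.lt_succ_self _

lemma card_edgeFinset_le_card_of_isAcyclic (hF : F.IsAcyclic) :
    #F.edgeFinset ≤ Fintype.card V := by
  cases isEmpty_or_nonempty V
  · simp [Subsingleton.elim F ⊥]
  · exact (card_edgeFinset_lt_card_of_isAcyclic hF).le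

lemma exists_degree_le_one_of_isAcyclic [Nonempty V] (hF : F.IsAcyclic) :
    ∃ v, F.degree v ≤ 1 := by
  by_contra! hdeg
  have htwo : Fintype.card V * 2 ≤ 2 * #F.edgeFinset := by
    rw [← F.sum_degrees_eq_twice_card_edges]
    exact card_nsmul_le_sum univ _ 2 fun v _ ↦ hdeg v
  have := card_edgeFinset_lt_card_of_isAcyclic hF
  omega

lemma exists_card_neighborFinset_inter_le_one_of_isAcyclic [DecidableEq V] (hF : F.IsAcyclic)
    {H : Finset V} (hH : H.Nonempty) : ∃ u ∈ H, #(F.neighborFinset u ∩ H) ≤ 1 := by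
  have : Nonempty (H : Set V) := hH.to_subtype
  obtain ⟨u, hu⟩ := exists_degree_le_one_of_isAcyclic (hF.induce (H : Set V))
  refine ⟨u, u.2, ?_⟩
  have hmap := F.map_neighborFinset_induce u
  rw [toFinset_coe] at hmap
  rw [← hmap, card_map, SimpleGraph.card_neighborFinset_eq_degree]
  convert hu

lemma card_filter_mem_sym2_le_one_add {α : Type*} [DecidableEq α] (H : Finset α) (e : Sym2 α) :
    #{u ∈ H | u ∈ e} ≤ 1 + if e ∈ H.sym2 then 1 else 0 := by
  induction e with
  | h x y =>
    have hsub : {u ∈ H | u ∈ s(x, y)} ⊆ {x, y} := fun u ↦ by simp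
    split_ifs with hxy
    · exact (card_le_card hsub).trans card_le_two
    · refine card_le_one.2 fun u hu w hw ↦ ?_
      simp only [mem_filter, Sym2.mem_iff, mk_mem_sym2_iff] at hu hw hxy
      grind

lemma card_edgeFinset_inter_sym2_le_of_isAcyclic [DecidableEq V] (hF : F.IsAcyclic)
    (H : Finset V) : #(F.edgeFinset ∩ H.sym2) ≤ #H := by
  rw [← SimpleGraph.filter_edgeFinset_toFinset_subset,
    SimpleGraph.card_filter_edgeFinset_toFinset_subset]
  simpa using card_edgeFinset_le_card_of_isAcyclic (hF.induce (H : Set V))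

/- Every edge is counted once, and the edges inside `H` once more. -/
lemma sum_degree_le_of_isAcyclic (hF : F.IsAcyclic) (H : Finset V) :
    ∑ u ∈ H, F.degree u ≤ Fintype.card V + #H := by
  classical
  calc ∑ u ∈ H, F.degree u = ∑ u ∈ H, #{e ∈ F.edgeFinset | u ∈ e} := by
        simp only [← F.card_incidenceFinset_eq_degree, F.incidenceFinset_eq_filter]
    _ = ∑ e ∈ F.edgeFinset, #{u ∈ H | u ∈ e} :=
        sum_card_bipartiteAbove_eq_sum_card_bipartiteBelow (· ∈ ·)
    _ ≤ ∑ e ∈ F.edgeFinset, (1 + if e ∈ H.sym2 then 1 else 0) :=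
        sum_le_sum fun e _ ↦ card_filter_mem_sym2_le_one_add H e
    _ = #F.edgeFinset + #(F.edgeFinset ∩ H.sym2) := by
        rw [sum_add_distrib, sum_const, smul_eq_mul, mul_one, ← filter_mem_eq_inter, card_filter]
    _ ≤ Fintype.card V + #H :=
        add_le_add (card_edgeFinset_le_card_of_isAcyclic hF)
          (card_edgeFinset_inter_sym2_le_of_isAcyclic hF H)

lemma card_filter_le_degree_mul_le_of_isAcyclic (hF : F.IsAcyclic) (k : ℕ) :
    #{x | k ≤ F.degree x} * k ≤ Fintype.card V + #{x | k ≤ F.degree x} :=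
  (card_nsmul_le_sum _ _ k fun _ hx ↦ (mem_filter.1 hx).2).trans
    (sum_degree_le_of_isAcyclic hF _)

end Forest

section FiniteSums

lemma abs_sum_le_card_mul {ι : Type*} {s : Finset ι} {f : ι → ℤ} {M : ℤ}
    (hf : ∀ i ∈ s, |f i| ≤ M) : |∑ i ∈ s, f i| ≤ #s * M :=
  (abs_sum_le_sum_abs f s).trans (by simpa using sum_le_card_nsmul s _ M hf)

lemma abs_sum_sub_le_two_mul_card {ι α : Type*} {φ : α → ℤ} (hφ : ∀ a, |φ a| ≤ 1)
    (s : Finset ι) (p q : ι → α) : |∑ i ∈ s, (φ (p i) - φ (q i))| ≤ 2 * #s := by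
  rw [mul_comm]
  exact abs_sum_le_card_mul fun i _ ↦ (abs_sub _ _).trans (by linarith [hφ (p i), hφ (q i)])

/- Delete the elements one at a time, each time one whose value has the sign of the current sum. -/
lemma exists_subset_card_eq_abs_sum_le {ι : Type*} {h : ι → ℤ} {M : ℤ} {A : Finset ι} {m : ℕ}
    (hh : ∀ x ∈ A, h x = M ∨ h x = 0 ∨ h x = -M) (hm : m ≤ #A)
    (hA : |∑ x ∈ A, h x| ≤ (#A - m + 1) * M) :
    ∃ X ⊆ A, #X = m ∧ |∑ x ∈ X, h x| ≤ M := by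
  classical
  induction hj : #A - m generalizing A with
  | zero =>
    obtain rfl : m = #A := by omega
    exact ⟨A, Subset.rfl, rfl, by simpa using hA⟩
  | succ j ih =>
    have hM : 0 ≤ M := by
      have hpos : (0 : ℤ) < #A - m + 1 := by omega
      exact nonneg_of_mul_nonneg_right ((abs_nonneg _).trans hA) hpos
    have hAM : |∑ x ∈ A, h x| ≤ (j + 1 : ℤ) * M + M := by
      convert hA using 1
      rw [show (#A : ℤ) = m + (j + 1) by omega]
      ring
    obtain ⟨x, hx, hxsum⟩ : ∃ x ∈ A, |∑ y ∈ A, h y - h x| ≤ (j + 1) * M := by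
      have hjM : 0 ≤ j * M := by positivity
      rw [abs_le] at hAM
      rcases lt_trichotomy (∑ y ∈ A, h y) 0 with hneg | hzero | hpos
      · obtain ⟨x, hx, hx0⟩ := exists_lt_of_sum_lt (f := h) (g := fun _ ↦ 0) (by simpa using hneg)
        refine ⟨x, hx, abs_le.2 ?_⟩
        rcases hh x hx with hM' | hM' | hM' <;> constructor <;> linarith
      · obtain ⟨x, hx⟩ : A.Nonempty := card_pos.1 (by omega)
        refine ⟨x, hx, abs_le.2 ?_⟩
        rcases hh x hx with hM' | hM' | hM' <;> constructor <;> linarith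
      · obtain ⟨x, hx, hx0⟩ := exists_lt_of_sum_lt (f := fun _ ↦ 0) (g := h) (by simpa using hpos)
        refine ⟨x, hx, abs_le.2 ?_⟩
        rcases hh x hx with hM' | hM' | hM' <;> constructor <;> linarith
    have hcard := card_erase_of_mem hx
    obtain ⟨X, hXA, hXm, hX⟩ := ih (A := A.erase x) (fun y hy ↦ hh y (mem_of_mem_erase hy))
      (by omega) (by
        rw [sum_erase_eq_sub hx]
        convert hxsum using 2
        omega) (by omega)
    exact ⟨X, hXA.trans (erase_subset _ _), hXm, hX⟩

lemma exists_abs_le_of_reflTransGen {α : Type*} {φ : α → ℤ} {k : ℕ} {a b : α}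
    (hab : Relation.ReflTransGen (fun x y ↦ |φ x - φ y| ≤ 2 * k) a b)
    (ha : φ a ≤ 0) (hb : 0 ≤ φ b) : ∃ x, |φ x| ≤ k := by
  induction hab with
  | refl => exact ⟨a, by rw [le_antisymm ha hb]; simp⟩
  | @tail x y _ hxy ih =>
    rcases le_or_gt 0 (φ x) with hx | hx
    · exact ih hx
    · by_contra! hfar
      have hkx := hfar x
      have hky := hfar y
      rw [abs_of_neg hx] at hkx
      rw [abs_of_nonneg hb] at hky
      linarith [(abs_le.1 hxy).1]

lemma exists_abs_le_of_forall_reflTransGen {α : Type*} [Fintype α] [Nonempty α] {φ : α → ℤ}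
    {k : ℕ} (hφ : ∀ a b, Relation.ReflTransGen (fun x y ↦ |φ x - φ y| ≤ 2 * k) a b)
    (hsum : ∑ a, φ a = 0) : ∃ a, |φ a| ≤ k := by
  obtain ⟨a, -, ha⟩ := exists_le_of_sum_le (f := φ) (g := 0) univ_nonempty (by simp [hsum])
  obtain ⟨b, -, hb⟩ := exists_le_of_sum_le (f := 0) (g := φ) univ_nonempty (by simp [hsum])
  exact exists_abs_le_of_reflTransGen (hφ a b) ha hb

end FiniteSums

lemma exists_perm_image_eq_of_subset {α : Type*} [Finite α] [DecidableEq α] {A W Y : Finset α}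
    (hW : W ⊆ A) (hY : Y ⊆ A) (hcard : #W = #Y) :
    ∃ σ : Perm α, (∀ x ∉ A, σ x = x) ∧ W.image σ = Y := by
  cases nonempty_fintype α
  let e : W ≃ Y := equivOfCardEq hcard
  obtain ⟨σ, hσ⟩ := Perm.exists_extending_pair
    (Sum.elim (fun x : (Aᶜ : Finset α) ↦ (x : α)) fun w : W ↦ (w : α))
    (Sum.elim (fun x : (Aᶜ : Finset α) ↦ (x : α)) fun w : W ↦ (e w : α))
    (Subtype.val_injective.sumElim Subtype.val_injective fun x w h ↦
      mem_compl.1 x.2 (h ▸ hW w.2))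
    (Subtype.val_injective.sumElim (Subtype.val_injective.comp e.injective) fun x w h ↦
      mem_compl.1 x.2 (h ▸ hY (e w).2))
  have hσW (w : W) : σ w = e w := hσ (.inr w)
  refine ⟨σ, fun x hx ↦ hσ (.inl ⟨x, mem_compl.2 hx⟩), ?_⟩
  refine eq_of_subset_of_card_le (image_subset_iff.2 fun w hw ↦ ?_) ?_
  · rw [hσW ⟨w, hw⟩]
    exact (e ⟨w, hw⟩).2
  · rw [card_image_of_injective _ σ.injective, hcard]

section Signing

variable {V : Type*} {c : Sym2 V → ℤ}

/-- A `±1`-colouring of the edges of the complete graph on `V`, extended by `0` to the diagonal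
of `Sym2 V`. -/
structure IsEdgeSigning (c : Sym2 V → ℤ) : Prop where
  diag (x : V) : c s(x, x) = 0
  eq_one_or_eq_neg_one {x y : V} (hxy : x ≠ y) : c s(x, y) = 1 ∨ c s(x, y) = -1

lemma IsEdgeSigning.abs_le_one (hc : IsEdgeSigning c) (e : Sym2 V) : |c e| ≤ 1 := by
  induction e with
  | h x y =>
    rcases eq_or_ne x y with rfl | hxy
    · simp [hc.diag]
    · rcases hc.eq_one_or_eq_neg_one hxy with h | h <;> simp [h]

variable [Fintype V]

/-- The number of positive minus the number of negative edges at `x`, when `c` is an edge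
signing. -/
def signedDegree (c : Sym2 V → ℤ) (x : V) : ℤ := ∑ y, c s(x, y)

lemma sum_incidenceFinset_eq_sum_neighborFinset [DecidableEq V] {M : Type*} [AddCommMonoid M]
    (G : SimpleGraph V) [DecidableRel G.Adj] (g : Sym2 V → M) (u : V) :
    ∑ e ∈ G.incidenceFinset u, g e = ∑ w ∈ G.neighborFinset u, g s(u, w) := by
  symm
  refine sum_nbij (fun w ↦ s(u, w)) (by simp) (fun w _ w' _ h ↦ Sym2.congr_right.1 h) ?_
    fun _ _ ↦ rfl
  intro e he
  rw [mem_coe, SimpleGraph.mem_incidenceFinset] at he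
  obtain ⟨w, rfl⟩ := he.2
  exact ⟨w, by simpa using he, rfl⟩

lemma sum_signedDegree [DecidableEq V] (hdiag : ∀ x, c s(x, x) = 0) :
    ∑ x, signedDegree c x = 2 * ∑ e ∈ (⊤ : SimpleGraph V).edgeFinset, c e := by
  have hdeg (x : V) :
      signedDegree c x = ∑ e ∈ (⊤ : SimpleGraph V).edgeFinset with x ∈ e, c e := by
    rw [← SimpleGraph.incidenceFinset_eq_filter, sum_incidenceFinset_eq_sum_neighborFinset,
      SimpleGraph.neighborFinset_eq_filter, signedDegree]
    refine (sum_filter_of_ne fun y _ hy ↦ ?_).symm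
    rintro rfl
    exact hy (hdiag x)
  have hcard {e : Sym2 V} (he : e ∈ (⊤ : SimpleGraph V).edgeFinset) :
      #{x | x ∈ e} = 2 := by
    rw [← e.card_toFinset_of_not_isDiag (by simpa using he)]
    congr 1
    ext
    simp
  simp only [hdeg, sum_filter]
  rw [sum_comm, mul_sum]
  refine sum_congr rfl fun e he ↦ ?_
  rw [← sum_filter, sum_const, hcard he, nsmul_eq_mul, Nat.cast_ofNat]

lemma abs_signedDegree_le (hc : ∀ e, |c e| ≤ 1) (x : V) :
    |signedDegree c x| ≤ Fintype.card V := by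
  simpa [signedDegree] using abs_sum_le_card_mul (s := univ) fun y _ ↦ hc s(x, y)

lemma abs_sum_signedDegree_sub_le (hc : ∀ e, |c e| ≤ 1) (X Y : Finset V) :
    |∑ x ∈ X, signedDegree c x - ∑ x ∈ X, ∑ y ∈ Y, c s(x, y)|
      ≤ #X * (Fintype.card V - #Y : ℤ) := by
  classical
  rw [← sum_sub_distrib]
  refine abs_sum_le_card_mul fun x _ ↦ ?_
  rw [signedDegree, ← sum_add_sum_compl Y, add_sub_cancel_left]
  refine (abs_sum_le_card_mul fun y _ ↦ hc s(x, y)).trans_eq ?_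
  rw [card_compl, Nat.cast_sub (card_le_univ Y), mul_one]

lemma card_mul_sum_signedDegree_sub_le (hc : ∀ e, |c e| ≤ 1) (R B : Finset V) :
    #B * ∑ x ∈ R, signedDegree c x - #R * ∑ x ∈ B, signedDegree c x
      ≤ #R * #B * (2 * (Fintype.card V - min #R #B : ℤ)) := by
  set crossing := ∑ x ∈ R, ∑ y ∈ B, c s(x, y) with hcrossing
  have hcomm : ∑ x ∈ B, ∑ y ∈ R, c s(x, y) = crossing := by
    rw [sum_comm]
    simp only [hcrossing, Sym2.eq_swap]
  have hR := (abs_le.1 (abs_sum_signedDegree_sub_le hc R B)).2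
  have hB := (abs_le.1 (abs_sum_signedDegree_sub_le hc B R)).1
  rw [hcomm] at hB
  have habs : |crossing| ≤ #R * #B := abs_sum_le_card_mul fun x _ ↦ by
    simpa using abs_sum_le_card_mul fun y (_ : y ∈ B) ↦ hc s(x, y)
  rw [abs_le] at habs
  have hR' := mul_le_mul_of_nonneg_left hR (Int.natCast_nonneg #B)
  have hB' := mul_le_mul_of_nonneg_left hB (Int.natCast_nonneg #R)
  rcases le_total #R #B with hle | hle
  · have := mul_le_mul_of_nonneg_left habs.2 (sub_nonneg.2 (Int.ofNat_le.2 hle))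
    rw [min_eq_left (by exact_mod_cast hle)]
    linarith
  · have := mul_le_mul_of_nonneg_left habs.1 (sub_nonneg.2 (Int.ofNat_le.2 hle))
    rw [min_eq_right (by exact_mod_cast hle)]
    linarith

lemma exists_signedDegree_sub_le (hc : ∀ e, |c e| ≤ 1) {R B : Finset V} (hR : R.Nonempty)
    (hB : B.Nonempty) : ∃ p ∈ R, ∃ q ∈ B,
      signedDegree c p - signedDegree c q ≤ 2 * (Fintype.card V - min #R #B : ℤ) := by
  obtain ⟨⟨p, q⟩, hpq, hle⟩ := exists_le_of_sum_le (s := R ×ˢ B)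
    (f := fun z ↦ signedDegree c z.1 - signedDegree c z.2)
    (g := fun _ ↦ 2 * (Fintype.card V - min #R #B : ℤ)) (hR.product hB) (by
      simpa [sum_product, sum_sub_distrib, mul_sum] using card_mul_sum_signedDegree_sub_le hc R B)
  exact ⟨p, (mem_product.1 hpq).1, q, (mem_product.1 hpq).2, hle⟩

lemma three_mul_card_le_of_sum_eq_zero {d : V → ℤ} {M : ℤ} (hM : 0 < M) (hd : ∀ x, d x ≤ M)
    (hsum : ∑ x, d x = 0) {B : Finset V} (hB : ∀ x ∈ B, 2 * d x ≤ -M) :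
    3 * #B ≤ 2 * Fintype.card V := by
  classical
  have hin : ∑ x ∈ B, 2 * d x ≤ #B * (-M) := by simpa using sum_le_card_nsmul B _ _ hB
  have hout : ∑ x ∈ Bᶜ, d x ≤ (Fintype.card V - #B : ℤ) * M := by
    simpa [card_compl, Nat.cast_sub (card_le_univ B)] using
      sum_le_card_nsmul Bᶜ _ _ fun x _ ↦ hd x
  rw [← mul_sum] at hin
  rw [← sum_add_sum_compl B] at hsum
  have : M * (3 * #B) ≤ M * (2 * Fintype.card V) := by linarith
  exact_mod_cast le_of_mul_le_mul_left this hM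

/-- The signed degrees of `x` and `y` differ by at most `3/2` times the number of vertices. -/
def NearDegree (c : Sym2 V → ℤ) (x y : V) : Prop :=
  2 * |signedDegree c x - signedDegree c y| ≤ 3 * Fintype.card V

lemma NearDegree.symm {x y : V} (h : NearDegree c x y) : NearDegree c y x := by
  rwa [NearDegree, abs_sub_comm]

/- If the two sides were far apart, the extreme signed degrees would force both sides to contain
at least a quarter of the vertices. -/
lemma exists_nearDegree_of_pos_of_nonpos (hc : ∀ e, |c e| ≤ 1)
    (hbal : ∑ x, signedDegree c x = 0) {S R B : Finset V} (hS : 12 * #S ≤ Fintype.card V)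
    (hcover : Fintype.card V ≤ #R + #B + #S) (hR : R.Nonempty) (hB : B.Nonempty)
    (hpos : ∀ p ∈ R, 0 < signedDegree c p) (hneg : ∀ q ∈ B, signedDegree c q ≤ 0) :
    ∃ p ∈ R, ∃ q ∈ B, NearDegree c p q := by
  by_contra! hfar
  have hgap (p : V) (hp : p ∈ R) (q : V) (hq : q ∈ B) :
      3 * Fintype.card V < 2 * (signedDegree c p - signedDegree c q) := by
    have := hfar p hp q hq
    rwa [NearDegree, not_le, abs_of_nonneg (by linarith [hpos p hp, hneg q hq])] at this
  have hle (x : V) := abs_le.1 (abs_signedDegree_le hc x)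
  obtain ⟨p₀, hp₀⟩ := hR
  obtain ⟨q₀, hq₀⟩ := hB
  have hn : (0 : ℤ) < Fintype.card V := by exact_mod_cast Fintype.card_pos_iff.2 ⟨p₀⟩
  have hcardB : 3 * #B ≤ 2 * Fintype.card V :=
    three_mul_card_le_of_sum_eq_zero hn (fun x ↦ (hle x).2) hbal fun q hq ↦ by
      linarith [hgap p₀ hp₀ q hq, hle p₀]
  have hcardR : 3 * #R ≤ 2 * Fintype.card V :=
    three_mul_card_le_of_sum_eq_zero (d := fun x ↦ -signedDegree c x) hn
      (fun x ↦ by linarith [hle x]) (by simp [hbal]) fun p hp ↦ by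
      linarith [hgap p hp q₀ hq₀, hle q₀]
  obtain ⟨p, hp, q, hq, hpq⟩ := exists_signedDegree_sub_le hc ⟨p₀, hp₀⟩ ⟨q₀, hq₀⟩
  have := hgap p hp q hq
  omega

lemma nearDegree_of_pos_iff_pos (hc : ∀ e, |c e| ≤ 1) {x y : V}
    (hxy : 0 < signedDegree c x ↔ 0 < signedDegree c y) : NearDegree c x y := by
  have hx := abs_le.1 (abs_signedDegree_le hc x)
  have hy := abs_le.1 (abs_signedDegree_le hc y)
  have hdiff : |signedDegree c x - signedDegree c y| ≤ Fintype.card V := by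
    rw [abs_le]
    omega
  unfold NearDegree
  linarith [Int.natCast_nonneg (Fintype.card V)]

lemma exists_nearDegree_path (hc : ∀ e, |c e| ≤ 1) (hbal : ∑ x, signedDegree c x = 0)
    {S : Finset V} (hS : 12 * #S ≤ Fintype.card V) {a b : V} (ha : a ∉ S) (hb : b ∉ S) :
    ∃ p ∉ S, ∃ q ∉ S, NearDegree c a p ∧ NearDegree c p q ∧ NearDegree c q b := by
  classical
  have hbridge {x y : V} (hx : x ∉ S) (hxpos : 0 < signedDegree c x) (hy : y ∉ S)
      (hyneg : signedDegree c y ≤ 0) :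
      ∃ p ∉ S, ∃ q ∉ S, NearDegree c x p ∧ NearDegree c p q ∧ NearDegree c q y := by
    obtain ⟨p, hp, q, hq, hpq⟩ := exists_nearDegree_of_pos_of_nonpos hc hbal hS
      (R := {z ∈ Sᶜ | 0 < signedDegree c z}) (B := {z ∈ Sᶜ | ¬ 0 < signedDegree c z})
      (by rw [card_filter_add_card_filter_not, card_compl_add_card])
      ⟨x, by simp [hx, hxpos]⟩ ⟨y, by simp [hy, hyneg]⟩ (by simp) (by simp)
    simp only [mem_filter, mem_compl] at hp hq
    exact ⟨p, hp.1, q, hq.1, nearDegree_of_pos_iff_pos hc (by simp [hxpos, hp.2]), hpq,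
      nearDegree_of_pos_iff_pos hc (by simp [hyneg, hq.2])⟩
  by_cases hsign : 0 < signedDegree c a ↔ 0 < signedDegree c b
  · exact ⟨a, ha, a, ha, nearDegree_of_pos_iff_pos hc Iff.rfl,
      nearDegree_of_pos_iff_pos hc Iff.rfl, nearDegree_of_pos_iff_pos hc hsign⟩
  rcases lt_or_ge 0 (signedDegree c a) with hapos | haneg
  · exact hbridge ha hapos hb (by simpa [hapos] using hsign)
  · obtain ⟨p, hp, q, hq, hbp, hpq, hqa⟩ := hbridge hb (by grind) ha haneg
    exact ⟨q, hq, p, hp, hqa.symm, hpq.symm, hbp.symm⟩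

end Signing

section Copies

variable {V : Type*} [Fintype V] [DecidableEq V] {c : Sym2 V → ℤ}

lemma exists_perm_map_eq {α : Type*} {e e' : Sym2 α} (he : ¬ e.IsDiag)
    (he' : ¬ e'.IsDiag) : ∃ σ : Perm α, Sym2.map σ e = e' := by
  induction e with | h x y
  induction e' with | h x' y'
  obtain ⟨σ, hx, hy⟩ := MulAction.is_two_pretransitive_iff.1
    (Perm.isMultiplyPretransitive α 2)
    (by simpa using he) (by simpa using he')
  exact ⟨σ, by simp_all⟩

lemma sum_edgeFinset_top_map {M : Type*} [AddCommMonoid M] (g : Sym2 V → M) (f : Perm V) :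
    ∑ e ∈ (⊤ : SimpleGraph V).edgeFinset, g (Sym2.map f e)
      = ∑ e ∈ (⊤ : SimpleGraph V).edgeFinset, g e :=
  sum_bijective (Sym2.map f) (Finite.injective_iff_bijective.1 (Sym2.map.injective f.injective))
    (by simp [Sym2.isDiag_map f.injective]) fun _ _ ↦ rfl

lemma sum_perm_map_eq_zero (hc : ∑ e ∈ (⊤ : SimpleGraph V).edgeFinset, c e = 0) {e : Sym2 V}
    (he : ¬ e.IsDiag) : ∑ f : Perm V, c (Sym2.map f e) = 0 := by
  have hconst (e' : Sym2 V) (he' : e' ∈ (⊤ : SimpleGraph V).edgeFinset) :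
      ∑ f : Perm V, c (Sym2.map f e') = ∑ f : Perm V, c (Sym2.map f e) := by
    obtain ⟨σ, rfl⟩ := exists_perm_map_eq he (by simpa using he')
    exact Fintype.sum_equiv (Equiv.mulRight σ) _ _ fun f ↦ by simp [Sym2.map_map]
  have hzero : ∑ e' ∈ (⊤ : SimpleGraph V).edgeFinset, ∑ f : Perm V, c (Sym2.map f e') = 0 := by
    rw [sum_comm]
    exact sum_eq_zero fun f _ ↦ (sum_edgeFinset_top_map c f).trans hc
  rw [sum_congr rfl hconst, sum_const, smul_eq_zero, card_eq_zero] at hzero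
  exact hzero.resolve_left (ne_empty_of_mem (a := e) (by simpa using he))

/-- The signed sum `c(F')` over the edges of the copy `F'` of `F` obtained by relabelling the
vertices along `f`. -/
def copySum (F : SimpleGraph V) [DecidableRel F.Adj] (c : Sym2 V → ℤ) (f : Perm V) : ℤ :=
  ∑ e ∈ F.edgeFinset, c (Sym2.map f e)

variable {F : SimpleGraph V} [DecidableRel F.Adj]

lemma sum_copySum_eq_zero (hc : ∑ e ∈ (⊤ : SimpleGraph V).edgeFinset, c e = 0) :
    ∑ f, copySum F c f = 0 := by
  simp only [copySum]
  rw [sum_comm]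
  exact sum_eq_zero fun e he ↦ sum_perm_map_eq_zero hc
    (F.not_isDiag_of_mem_edgeSet (SimpleGraph.mem_edgeFinset.1 he))

lemma sum_incidenceFinset_sub_mul_swap (c : Sym2 V → ℤ) (f : Perm V) (u v : V) :
    ∑ e ∈ F.incidenceFinset u, (c (Sym2.map f e) - c (Sym2.map (f * swap u v) e))
      = ∑ w ∈ (F.neighborFinset u).erase v, (c s(f u, f w) - c s(f v, f w)) := by
  rw [sum_incidenceFinset_eq_sum_neighborFinset, ← sum_erase (a := v) _ (by simp [Sym2.eq_swap])]
  refine sum_congr rfl fun w hw ↦ ?_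
  have hwu : w ≠ u := by
    rintro rfl
    simp at hw
  simp [swap_apply_of_ne_of_ne hwu (ne_of_mem_erase hw)]

lemma copySum_sub_copySum_mul_swap (c : Sym2 V → ℤ) (f : Perm V) {u v : V} (huv : u ≠ v) :
    copySum F c f - copySum F c (f * swap u v)
      = ∑ w ∈ (F.neighborFinset u).erase v, (c s(f u, f w) - c s(f v, f w))
        + ∑ w ∈ (F.neighborFinset v).erase u, (c s(f v, f w) - c s(f u, f w)) := by
  let change (e : Sym2 V) : ℤ := c (Sym2.map f e) - c (Sym2.map (f * swap u v) e)
  have hoff (e : Sym2 V) (he : e ∈ F.edgeFinset)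
      (he' : e ∉ F.incidenceFinset u ∪ F.incidenceFinset v) : change e = 0 := by
    have hne (x : V) (hx : x ∈ e) : x ≠ u ∧ x ≠ v := by
      simp only [F.incidenceFinset_eq_filter, mem_union, mem_filter, he, true_and, not_or] at he'
      exact ⟨fun h ↦ he'.1 (h ▸ hx), fun h ↦ he'.2 (h ▸ hx)⟩
    rw [sub_eq_zero, Sym2.map_congr fun x hx ↦ ?_]
    simp [swap_apply_of_ne_of_ne (hne x hx).1 (hne x hx).2]
  have hboth (e : Sym2 V) (he : e ∈ F.incidenceFinset u ∩ F.incidenceFinset v) :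
      change e = 0 := by
    simp only [mem_inter, SimpleGraph.mem_incidenceFinset] at he
    rw [(Sym2.mem_and_mem_iff huv).1 ⟨he.1.2, he.2.2⟩]
    simp [change, Sym2.eq_swap]
  calc copySum F c f - copySum F c (f * swap u v) = ∑ e ∈ F.edgeFinset, change e :=
        (sum_sub_distrib ..).symm
    _ = ∑ e ∈ F.incidenceFinset u ∪ F.incidenceFinset v, change e :=
        (sum_subset (union_subset (F.incidenceFinset_subset u) (F.incidenceFinset_subset v))
          hoff).symm
    _ = ∑ e ∈ F.incidenceFinset u, change e + ∑ e ∈ F.incidenceFinset v, change e := by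
        rw [← sum_union_inter, sum_eq_zero hboth, add_zero]
    _ = _ := by
        rw [sum_incidenceFinset_sub_mul_swap, ← sum_incidenceFinset_sub_mul_swap c f v u,
          swap_comm v u]

end Copies

section Flexibility

variable {V : Type*} [Fintype V]

/-- One can pass from the copy of `F` given by `f` to the one given by `g` through copies whose
signed sums change by at most `2 * k` at a time. -/
def CopyLinked (F : SimpleGraph V) [DecidableRel F.Adj] (c : Sym2 V → ℤ) (k : ℕ) :
    Perm V → Perm V → Prop :=
  Relation.ReflTransGen fun f g ↦ |copySum F c f - copySum F c g| ≤ 2 * k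

/-- The vertices of `F` in `T` can be rearranged arbitrarily, keeping the images of all other
vertices, in steps that change the signed sum by at most `2 * k`. The copies in between may move
any vertex. -/
def IsFlexible (F : SimpleGraph V) [DecidableRel F.Adj] (c : Sym2 V → ℤ) (k : ℕ)
    (T : Finset V) : Prop :=
  ∀ f g : Perm V, (∀ x ∉ T, f x = g x) → CopyLinked F c k f g

variable {F : SimpleGraph V} [DecidableRel F.Adj] {c : Sym2 V → ℤ} {k : ℕ} {T : Finset V}
  {u v : V}

lemma isFlexible_singleton (v : V) : IsFlexible F c k {v} := by
  classical
  intro f g hfg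
  have hsupport : (f⁻¹ * g).support ⊆ {v} := fun x hx ↦ by
    contrapose! hx
    simp [← hfg x hx]
  rw [inv_mul_eq_one.1 (Perm.card_support_le_one.1 ((card_le_card hsupport).trans_eq
    (card_singleton v)))]
  exact .refl

variable [DecidableEq V]

/- Inside `T`, first bring `g u` to the vertex `v`, then swap `u` and `v`, and finally adjust the
rest of `T`. -/
lemma IsFlexible.copyLinked_of_swap (hT : IsFlexible F c k T) (hu : u ∉ T) (hv : v ∈ T)
    {f g : Perm V} (hfg : ∀ x ∉ insert u T, f x = g x)
    (hswap : ∀ f₁ : Perm V, f₁ u = f u → f₁ v = g u → ∃ f₂ : Perm V,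
      (∀ x ∉ T, f₂ x = f₁ x) ∧ f₂ v = f₁ v ∧
        |copySum F c f₂ - copySum F c (f₂ * swap u v)| ≤ 2 * k) :
    CopyLinked F c k f g := by
  by_cases hfu : f u = g u
  · refine hT f g fun x hx ↦ ?_
    rcases eq_or_ne x u with rfl | hxu
    · exact hfu
    · exact hfg x (by simp [hx, hxu])
  obtain ⟨y, hy⟩ := f.surjective (g u)
  have hyu : y ≠ u := by
    rintro rfl
    exact hfu hy
  have hyT : y ∈ T := by
    by_contra hyT
    exact hyu (g.injective ((hfg y (by simp [hyT, hyu])).symm.trans hy))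
  have hne {x : V} (hx : x ∉ T) {t : V} (ht : t ∈ T) : x ≠ t := fun h ↦ hx (h ▸ ht)
  have hf₁ (x : V) (hx : x ∉ T) : (f * swap v y) x = f x := by
    simp [swap_apply_of_ne_of_ne (hne hx hv) (hne hx hyT)]
  obtain ⟨f₂, hf₂, hf₂v, hstep⟩ := hswap (f * swap v y) (hf₁ u hu) (by simp [hy])
  refine ((hT f f₂ fun x hx ↦ by rw [hf₂ x hx, hf₁ x hx]).tail hstep).trans
    (hT _ g fun x hx ↦ ?_)
  rcases eq_or_ne x u with rfl | hxu
  · simp [hf₂v, hy]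
  · simp [swap_apply_of_ne_of_ne hxu (hne hx hv), hf₂ x hx, hf₁ x hx, hfg x (by simp [hx, hxu])]

lemma abs_copySum_sub_copySum_mul_swap_le (hc : ∀ e, |c e| ≤ 1) (f : Perm V) (huv : u ≠ v) :
    |copySum F c f - copySum F c (f * swap u v)| ≤ 2 * (F.degree u + F.degree v : ℤ) := by
  rw [copySum_sub_copySum_mul_swap c f huv]
  have hu : (#((F.neighborFinset u).erase v) : ℤ) ≤ F.degree u := by
    exact_mod_cast card_erase_le
  have hv : (#((F.neighborFinset v).erase u) : ℤ) ≤ F.degree v := by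
    exact_mod_cast card_erase_le
  refine (abs_add_le _ _).trans ?_
  grw [abs_sum_sub_le_two_mul_card hc, abs_sum_sub_le_two_mul_card hc, hu, hv]
  rw [mul_add]

lemma IsFlexible.insert_of_degree_lt (hT : IsFlexible F c k T) (hc : ∀ e, |c e| ≤ 1)
    (hv : v ∈ T) (hvdeg : F.degree v ≤ 1) (hudeg : F.degree u < k) :
    IsFlexible F c k (insert u T) := by
  by_cases hu : u ∈ T
  · rwa [insert_eq_of_mem hu]
  intro f g hfg
  have huv : u ≠ v := fun h ↦ hu (h ▸ hv)
  refine hT.copyLinked_of_swap hu hv hfg fun f₁ _ _ ↦ ⟨f₁, fun _ _ ↦ rfl, rfl, ?_⟩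
  refine (abs_copySum_sub_copySum_mul_swap_le hc f₁ huv).trans ?_
  omega

lemma isFlexible_insert_of_forall_degree_lt (hc : ∀ e, |c e| ≤ 1) (hvdeg : F.degree v ≤ 1)
    (hT : ∀ u ∈ T, F.degree u < k) : IsFlexible F c k (insert v T) := by
  induction T using Finset.induction with
  | empty => exact isFlexible_singleton v
  | insert u T _ ih =>
    rw [insert_comm]
    exact (ih fun w hw ↦ hT w (mem_insert_of_mem hw)).insert_of_degree_lt hc (mem_insert_self v T)
      hvdeg (hT u (mem_insert_self u T))

lemma abs_sum_erase_sub_le (hc : IsEdgeSigning c) (f : Perm V) (hu : u ∉ T) (hv : v ∈ T) :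
    |∑ y ∈ T.erase v, (c s(f u, f y) - c s(f v, f y))|
      ≤ |signedDegree c (f u) - signedDegree c (f v)| + 2 * #Tᶜ := by
  let h (y : V) : ℤ := c s(f u, f y) - c s(f v, f y)
  have huniv : ∑ y, h y = signedDegree c (f u) - signedDegree c (f v) := by
    rw [sum_sub_distrib, Equiv.sum_comp f fun y ↦ c s(f u, y),
      Equiv.sum_comp f fun y ↦ c s(f v, y)]
    rfl
  have hcancel : h u + h v = 0 := by simp [h, hc.diag, Sym2.eq_swap]
  have hsplit : ∑ y ∈ T.erase v, h y = ∑ y, h y - ∑ y ∈ Tᶜ.erase u, h y := by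
    rw [← sum_add_sum_compl T, ← add_sum_erase T h hv, ← add_sum_erase Tᶜ h (mem_compl.2 hu)]
    linarith
  have hrest : |∑ y ∈ Tᶜ.erase u, h y| ≤ 2 * #Tᶜ := by
    refine (abs_sum_sub_le_two_mul_card hc.abs_le_one _ _ _).trans ?_
    grw [card_erase_le]
  calc |∑ y ∈ T.erase v, h y| ≤ |∑ y, h y| + |∑ y ∈ Tᶜ.erase u, h y| := by
        rw [hsplit]
        exact abs_sub _ _
    _ ≤ _ := by grw [huniv, hrest]

lemma exists_subset_erase_abs_sum_sub_le_two (hc : IsEdgeSigning c) {f : Perm V} (hu : u ∉ T)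
    (hv : v ∈ T) (hnear : NearDegree c (f u) (f v)) {m : ℕ}
    (hm : 8 * #Tᶜ + 4 * m ≤ Fintype.card V) :
    ∃ Y ⊆ T.erase v, #Y = m ∧ |∑ y ∈ Y, (c s(f u, f y) - c s(f v, f y))| ≤ 2 := by
  have hcompl : 0 < #Tᶜ := card_pos.2 ⟨u, mem_compl.2 hu⟩
  have hcard : #(T.erase v) + #Tᶜ + 1 = Fintype.card V := by
    rw [← card_add_card_compl T, ← card_erase_add_one hv]
    ring
  refine exists_subset_card_eq_abs_sum_le (fun y hy ↦ ?_) (by omega) ?_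
  · have hyu : f u ≠ f y := fun h ↦ hu (f.injective h ▸ mem_of_mem_erase hy)
    have hyv : f v ≠ f y := fun h ↦ ne_of_mem_erase hy (f.injective h).symm
    rcases hc.eq_one_or_eq_neg_one hyu with h | h <;>
      rcases hc.eq_one_or_eq_neg_one hyv with h' | h' <;> simp [h, h']
  · refine (abs_sum_erase_sub_le hc f hu hv).trans ?_
    unfold NearDegree at hnear
    omega

/- Rearranging `T.erase v`, the neighbours of `u` in it can be moved to any set of positions; there
is one on which swapping `u` and `v` has almost no effect. -/
lemma exists_abs_copySum_sub_copySum_mul_swap_le (hc : IsEdgeSigning c) {f : Perm V} (hu : u ∉ T)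
    (hv : v ∈ T) (hvdeg : F.degree v ≤ 1) (hout : #(F.neighborFinset u ∩ Tᶜ) ≤ 1)
    (hsize : 8 * #Tᶜ + 4 * F.degree u ≤ Fintype.card V) (hnear : NearDegree c (f u) (f v)) :
    ∃ f' : Perm V, (∀ x ∉ T.erase v, f' x = f x) ∧
      |copySum F c f' - copySum F c (f' * swap u v)| ≤ 6 := by
  let W := F.neighborFinset u ∩ T.erase v
  have hWdeg : #W ≤ F.degree u := card_le_card inter_subset_left
  obtain ⟨Y, hYT, hYcard, hY⟩ :=
    exists_subset_erase_abs_sum_sub_le_two hc hu hv hnear (m := #W) (by omega)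
  obtain ⟨σ, hσ, rfl⟩ := exists_perm_image_eq_of_subset inter_subset_right hYT hYcard.symm
  refine ⟨f * σ, fun x hx ↦ by simp [hσ x hx], ?_⟩
  have hσu : σ u = u := hσ u fun h ↦ hu (mem_of_mem_erase h)
  have hσv : σ v = v := hσ v (by simp)
  have hN : (F.neighborFinset u).erase v = W ∪ F.neighborFinset u ∩ Tᶜ := by
    ext x
    simp only [W, mem_erase, mem_union, mem_inter, mem_compl]
    grind
  have hdisj : Disjoint W (F.neighborFinset u ∩ Tᶜ) := by
    simp only [W, disjoint_left, mem_inter, mem_erase, mem_compl]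
    tauto
  have huv : u ≠ v := fun h ↦ hu (h ▸ hv)
  rw [copySum_sub_copySum_mul_swap c _ huv, hN, sum_union hdisj]
  rw [sum_image σ.injective.injOn] at hY
  simp only [Perm.mul_apply, hσu, hσv]
  refine (abs_add_le _ _).trans ((add_le_add_left (abs_add_le _ _) _).trans ?_)
  grw [hY, abs_sum_sub_le_two_mul_card hc.abs_le_one, abs_sum_sub_le_two_mul_card hc.abs_le_one,
    hout, card_erase_le, SimpleGraph.card_neighborFinset_eq_degree, hvdeg]
  norm_num

lemma IsFlexible.copyLinked_of_nearDegree (hT : IsFlexible F c k T) (hc : IsEdgeSigning c)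
    (hk : 3 ≤ k) (hu : u ∉ T) (hv : v ∈ T) (hvdeg : F.degree v ≤ 1)
    (hout : #(F.neighborFinset u ∩ Tᶜ) ≤ 1)
    (hsize : 8 * #Tᶜ + 4 * F.degree u ≤ Fintype.card V) {f g : Perm V}
    (hfg : ∀ x ∉ insert u T, f x = g x) (hnear : NearDegree c (f u) (g u)) :
    CopyLinked F c k f g := by
  refine hT.copyLinked_of_swap hu hv hfg fun f₁ hf₁u hf₁v ↦ ?_
  rw [← hf₁u, ← hf₁v] at hnear
  obtain ⟨f₂, hf₂, hle⟩ :=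
    exists_abs_copySum_sub_copySum_mul_swap_le hc hu hv hvdeg hout hsize hnear
  exact ⟨f₂, fun x hx ↦ hf₂ x fun h ↦ hx (mem_of_mem_erase h), hf₂ v (by simp),
    hle.trans (by omega)⟩

lemma IsFlexible.insert_of_card_neighborFinset_inter_le_one (hT : IsFlexible F c k T)
    (hc : IsEdgeSigning c) (hbal : ∑ x, signedDegree c x = 0) (hk : 3 ≤ k) (hu : u ∉ T)
    (hv : v ∈ T) (hvdeg : F.degree v ≤ 1) (hout : #(F.neighborFinset u ∩ Tᶜ) ≤ 1)
    (hcompl : 12 * #Tᶜ ≤ Fintype.card V)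
    (hsize : 8 * #Tᶜ + 4 * F.degree u ≤ Fintype.card V) :
    IsFlexible F c k (insert u T) := by
  intro f g hfg
  let S := (insert u T)ᶜ.image f
  have hS : 12 * #S ≤ Fintype.card V := by
    have : #S ≤ #Tᶜ :=
      card_image_le.trans (card_le_card (compl_subset_compl.2 (subset_insert u T)))
    omega
  have hfu : f u ∉ S := by simp [S]
  have hgu : g u ∉ S := by
    simp only [S, mem_image, mem_compl, not_exists, not_and]
    intro x hx hxg
    exact hx (g.injective ((hfg x hx).symm.trans hxg) ▸ mem_insert_self u T)
  have hmove {p : V} (hp : p ∉ S) : ∃ h : Perm V, (∀ x ∉ insert u T, f x = h x) ∧ h u = p := by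
    obtain ⟨y, rfl⟩ := f.surjective p
    have hy : y ∈ insert u T := by simpa [S, or_iff_not_imp_left] using hp
    refine ⟨f * swap u y, fun x hx ↦ ?_, by simp⟩
    have hxu : x ≠ u := fun h ↦ hx (h ▸ mem_insert_self u T)
    have hxy : x ≠ y := fun h ↦ hx (h ▸ hy)
    simp [swap_apply_of_ne_of_ne hxu hxy]
  obtain ⟨p, hp, q, hq, hfp, hpq, hqg⟩ := exists_nearDegree_path hc.abs_le_one hbal hS hfu hgu
  obtain ⟨a, hfa, rfl⟩ := hmove hp
  obtain ⟨b, hfb, rfl⟩ := hmove hq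
  have hlink {f g : Perm V} := hT.copyLinked_of_nearDegree hc hk hu hv hvdeg hout hsize
    (f := f) (g := g)
  exact ((hlink hfa hfp).trans (hlink (fun x hx ↦ (hfa x hx).symm.trans (hfb x hx)) hpq)).trans
    (hlink (fun x hx ↦ (hfb x hx).symm.trans (hfg x hx)) hqg)

lemma IsFlexible.univ (hT : IsFlexible F c k T) (hF : F.IsAcyclic) (hc : IsEdgeSigning c)
    (hbal : ∑ x, signedDegree c x = 0) (hk : 3 ≤ k) (hv : v ∈ T) (hvdeg : F.degree v ≤ 1)
    (hcompl : 12 * #Tᶜ ≤ Fintype.card V)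
    (hsize : 8 * #Tᶜ + 4 * F.maxDegree ≤ Fintype.card V) :
    IsFlexible F c k univ := by
  induction hj : #Tᶜ generalizing T with
  | zero => rwa [← (compl_eq_empty_iff T).1 (card_eq_zero.1 hj)]
  | succ j ih =>
    obtain ⟨u, hu, hout⟩ := exists_card_neighborFinset_inter_le_one_of_isAcyclic hF
      (H := Tᶜ) (card_pos.1 (by omega))
    have hudeg := F.degree_le_maxDegree u
    have hcard : #(insert u T)ᶜ = j := by
      rw [compl_insert, card_erase_of_mem hu, hj, Nat.add_sub_cancel]
    exact ih (hT.insert_of_card_neighborFinset_inter_le_one hc hbal hk (mem_compl.1 hu) hv hvdeg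
      hout hcompl (by omega)) (mem_insert_of_mem hv) (by omega) (by omega) hcard

theorem exists_abs_copySum_le [Nonempty V] (hF : F.IsAcyclic) (hc : IsEdgeSigning c)
    (hbal : ∑ e ∈ (⊤ : SimpleGraph V).edgeFinset, c e = 0) (hk : 3 ≤ k)
    (hcard : 12 * #{x | k ≤ F.degree x} ≤ Fintype.card V)
    (hsize : 8 * #{x | k ≤ F.degree x} + 4 * F.maxDegree ≤ Fintype.card V) :
    ∃ f, |copySum F c f| ≤ k := by
  obtain ⟨v, hvdeg⟩ := exists_degree_le_one_of_isAcyclic hF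
  let T : Finset V := {x | F.degree x < k}
  have hv : v ∈ T := mem_filter.2 ⟨mem_univ v, by omega⟩
  have hcompl : Tᶜ = ({x | k ≤ F.degree x} : Finset V) := by
    ext x
    simp [T]
  have hT : IsFlexible F c k T := by
    rw [← insert_eq_of_mem hv]
    exact isFlexible_insert_of_forall_degree_lt hc.abs_le_one hvdeg (by simp [T])
  have hsum : ∑ x, signedDegree c x = 0 := by rw [sum_signedDegree hc.diag, hbal, mul_zero]
  rw [← hcompl] at hcard hsize
  have huniv := hT.univ hF hc hsum hk hv hvdeg hcard hsize
  exact exists_abs_le_of_forall_reflTransGen (fun f g ↦ huniv f g (by simp))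
    (sum_copySum_eq_zero hbal)

end Flexibility

section General

variable {V : Type*} [Fintype V] {F : SimpleGraph V} [DecidableRel F.Adj]

lemma card_filter_floor_le_degree_le_of_isAcyclic [Nonempty V] (hF : F.IsAcyclic) {η : ℝ}
    (hη : 0 < η) (hΔ : (F.maxDegree : ℝ) ≤ (1 / 4 - η) * Fintype.card V) :
    16 ≤ ⌊4 / η⌋₊ ∧ 15 * #{x | ⌊4 / η⌋₊ ≤ F.degree x} ≤ Fintype.card V ∧
      8 * #{x | ⌊4 / η⌋₊ ≤ F.degree x} + 4 * F.maxDegree ≤ Fintype.card V := by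
  have hn : (0 : ℝ) < Fintype.card V := by exact_mod_cast Fintype.card_pos
  have hη_le : η ≤ 1 / 4 := by
    have := nonneg_of_mul_nonneg_left ((Nat.cast_nonneg _).trans hΔ) hn
    linarith
  set k := ⌊4 / η⌋₊
  set s := #{x | k ≤ F.degree x}
  have hk : 16 ≤ k := Nat.le_floor (by rw [le_div_iff₀ hη]; push_cast; linarith)
  have hkη : 4 < (k + 1) * η := (div_lt_iff₀ hη).1 (Nat.lt_floor_add_one _)
  have hs : s * k ≤ Fintype.card V + s := card_filter_le_degree_mul_le_of_isAcyclic hF k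
  have hs15 : 15 * s ≤ Fintype.card V := by nlinarith
  have hsη : 2 * s ≤ η * Fintype.card V := by
    have hsk : (s : ℝ) * k ≤ Fintype.card V + s := by exact_mod_cast hs
    calc 2 * (s : ℝ) ≤ s * ((k + 1) * η - 2 * η) := by nlinarith
      _ = η * (s * k - s) := by ring
      _ ≤ η * Fintype.card V := by gcongr; linarith
  refine ⟨hk, hs15, ?_⟩
  have : (8 * s + 4 * F.maxDegree : ℝ) ≤ Fintype.card V := by linarith
  exact_mod_cast this

variable [DecidableEq V] {c : Sym2 V → ℤ}

lemma isEdgeSigning_ite_isDiag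
    (hc : ∀ e ∈ (⊤ : SimpleGraph V).edgeFinset, c e = 1 ∨ c e = -1) :
    IsEdgeSigning fun e ↦ if e.IsDiag then 0 else c e where
  diag x := by simp
  eq_one_or_eq_neg_one hxy := by simpa [hxy] using hc s(_, _) (by simpa using hxy)

lemma sum_edgeFinset_ite_isDiag (G : SimpleGraph V) [DecidableRel G.Adj] (c : Sym2 V → ℤ)
    (f : Perm V) :
    ∑ e ∈ G.edgeFinset, (if (Sym2.map f e).IsDiag then 0 else c (Sym2.map f e))
      = ∑ e ∈ G.edgeFinset, c (Sym2.map f e) :=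
  sum_congr rfl fun _ he ↦ if_neg fun hdiag ↦ G.not_isDiag_of_mem_edgeSet
    (SimpleGraph.mem_edgeFinset.1 he) ((Sym2.isDiag_map f.injective).1 hdiag)

theorem almost_balanced_spanning_forest_const_bound_general (hF : F.IsAcyclic) {η : ℝ}
    (hη : 0 < η) (hΔ : (F.maxDegree : ℝ) ≤ (1 / 4 - η) * Fintype.card V)
    (hc : ∀ e ∈ (⊤ : SimpleGraph V).edgeFinset, c e = 1 ∨ c e = -1)
    (hbal : ∑ e ∈ (⊤ : SimpleGraph V).edgeFinset, c e = 0) :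
    ∃ f : Perm V, |(∑ e ∈ F.edgeFinset, c (Sym2.map f e) : ℝ)| ≤ 4 / η := by
  cases isEmpty_or_nonempty V
  · refine ⟨1, ?_⟩
    rw [eq_empty_of_isEmpty F.edgeFinset, sum_empty, abs_zero]
    positivity
  obtain ⟨hk, hcard, hsize⟩ := card_filter_floor_le_degree_le_of_isAcyclic hF hη hΔ
  obtain ⟨f, hf⟩ := exists_abs_copySum_le hF (isEdgeSigning_ite_isDiag hc)
    (by rwa [sum_congr rfl fun _ he ↦ if_neg (by simpa using he)]) (by omega) (by omega) hsize
  rw [copySum, sum_edgeFinset_ite_isDiag] at hf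
  refine ⟨f, le_trans ?_ (Nat.floor_le (by positivity))⟩
  exact_mod_cast hf

end General

/-- For constants `η ∈ (0, 1/4)` and `δ > 0`, there exists `n₀` such
that for every `n ≥ n₀`, every forest `F` on `n` vertices with maximum degree `Δ`
satisfying `15 ≤ Δ ≤ (1/4 - η)n`, and every balanced `±1`-colouring `c` of the edges of
`K_n`, there is a copy `F'` of `F` in `K_n` with `|c(F')| ≤ (1 + δ) * (4/η)`. -/
theorem almost_balanced_spanning_forest_const_bound
    (η δ : ℝ) (hη₁ : 0 < η) (hη₂ : η < 1 / 4) (hδ : 0 < δ) :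
    ∃ n₀ : ℕ, ∀ n : ℕ, n₀ ≤ n →
      ∀ (F : SimpleGraph (Fin n)) [DecidableRel F.Adj],
        F.IsAcyclic →
        ∀ Δ : ℕ, F.maxDegree = Δ → 15 ≤ Δ → (Δ : ℝ) ≤ (1 / 4 - η) * n →
          ∀ c : Sym2 (Fin n) → ℤ,
            (∀ e ∈ (⊤ : SimpleGraph (Fin n)).edgeFinset, c e = 1 ∨ c e = -1) →
            (∑ e ∈ (⊤ : SimpleGraph (Fin n)).edgeFinset, c e = 0) →
            ∃ f : Fin n ↪ Fin n,
              |(∑ e ∈ F.edgeFinset, c (Sym2.map (⇑f) e) : ℝ)| ≤ (1 + δ) * (4 / η) := by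
  refine ⟨0, fun n _ F _ hF Δ hFΔ _ hΔ c hc hbal ↦ ?_⟩
  obtain ⟨f, hf⟩ := almost_balanced_spanning_forest_const_bound_general hF hη₁
    (by simpa [hFΔ] using hΔ) hc hbal
  exact ⟨f.toEmbedding, hf.trans (le_mul_of_one_le_left (by positivity) (by linarith))⟩
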